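/- Let U ⊆ ℝ² be open and B : U → SL₂(𝒜) a C¹ map such that B⁻¹·∂_u B = [[0, θ₀], [ω₀, 0]] and B⁻¹·∂_v B = [[0, σθ₀], [σω₀, 0]] for conformal maps θ₀, ω₀ : U → 𝒜 (i.e. ∂_â θ₀ = ∂_â ω₀ = 0), so that B⁻¹dB = [[0, θ], [ω, 0]] with the conformal 1-forms θ = θ₀·da, ω = ω₀·da. Then F := B·B* satisfies: (i) F = F* and det F = 1, i.e. F takes values in the Anti-de Sitter space ℍ^{2,1} ≅ {C ∈ Herm₂(𝒜) : det C = 1}; (ii) for every X = (X₁, X₂) ∈ ℝ², with z := X₁ + σX₂, one has dF(X) = B·[[0, θ₀z + ω̂₀ẑ], [ω₀z + θ̂₀ẑ, 0]]·B* and −det(dF(X)) = |θ₀z + ω̂₀ẑ|² (the induced metric g = (θ + ω̄)(ω + θ̄)); (iii) at each point where |θ₀|² ≠ |ω₀|², the quadratic form X ↦ −det(dF(X)) on ℝ² is nondegenerate of signature (1,1), so F is a Lorentzian isometric immersion into ℍ^{2,1} there. -/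

import Mathlib

noncomputable section

/-! ### The algebra `𝒜` of Lorentz (split-complex) numbers.

We realize `𝒜` (the real algebra with basis `{1, σ}`, `σ² = 1`) in split coordinates:
`(x, y) : ℝ × ℝ` represents `u + σ v` with `x = u + v`, `y = u - v`.  Multiplication is then
componentwise, `1 = (1,1)`, and `σ = (1, -1)` satisfies `σ² = 1`. -/

abbrev LorentzA : Type := ℝ × ℝ

/-- The element `σ ∈ 𝒜`, with `σ² = 1`, `σ ∉ ℝ·1`. -/
def sA : LorentzA := (1, -1)

/-- The element `u + σ v` of `𝒜`. -/
def mkA (u v : ℝ) : LorentzA := (u + v, u - v)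

/-- The inclusion `ℝ ⊆ 𝒜`, `t ↦ t·1`. -/
def toA (t : ℝ) : LorentzA := (t, t)

/-- Conjugation of `𝒜`: `u + σ v ↦ u - σ v` (the swap, in split coordinates). -/
def conjA (a : LorentzA) : LorentzA := (a.2, a.1)

/-- `|a|² := a·â = u² - v²`, as a real number (so that `a * conjA a = toA (nsqA a)`). -/
def nsqA (a : LorentzA) : ℝ := a.1 * a.2

/-- The real part of `a = u + σ v ∈ 𝒜`, namely `u`. -/
def ReA (a : LorentzA) : ℝ := (a.1 + a.2) / 2

/-- The imaginary part of `a = u + σ v ∈ 𝒜`, namely `v`. -/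
def ImA (a : LorentzA) : ℝ := (a.1 - a.2) / 2

/-- The idempotent `(1 + σ)/2` of `𝒜`. -/
def eP : LorentzA := (1 + sA) / 2

/-- The idempotent `(1 - σ)/2` of `𝒜`. -/
def eM : LorentzA := (1 - sA) / 2

/-! ### Derivatives of maps `ℝ² → 𝒜` and `ℝ² → ℝ`. -/

/-- `∂_u f`. -/
def duA (f : ℝ × ℝ → LorentzA) (x : ℝ × ℝ) : LorentzA := fderiv ℝ f x (1, 0)

/-- `∂_v f`. -/
def dvA (f : ℝ × ℝ → LorentzA) (x : ℝ × ℝ) : LorentzA := fderiv ℝ f x (0, 1)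

/-- `∂_a f = ½ (∂_u f + σ ∂_v f)`. -/
def Da (f : ℝ × ℝ → LorentzA) (x : ℝ × ℝ) : LorentzA := ((2:ℝ)⁻¹) • (duA f x + sA * dvA f x)

/-- `∂_â f = ½ (∂_u f - σ ∂_v f)`.  A map is conformal iff `∂_â f = 0`. -/
def Dahat (f : ℝ × ℝ → LorentzA) (x : ℝ × ℝ) : LorentzA := ((2:ℝ)⁻¹) • (duA f x - sA * dvA f x)

/-- `∂_u f` for real-valued `f`. -/
def duR (f : ℝ × ℝ → ℝ) (x : ℝ × ℝ) : ℝ := fderiv ℝ f x (1, 0)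

/-- `∂_v f` for real-valued `f`. -/
def dvR (f : ℝ × ℝ → ℝ) (x : ℝ × ℝ) : ℝ := fderiv ℝ f x (0, 1)

/-- `∂²f/∂u²`. -/
def duuR (f : ℝ × ℝ → ℝ) (x : ℝ × ℝ) : ℝ := fderiv ℝ (fun y => fderiv ℝ f y (1, 0)) x (1, 0)

/-- `∂²f/∂v²`. -/
def dvvR (f : ℝ × ℝ → ℝ) (x : ℝ × ℝ) : ℝ := fderiv ℝ (fun y => fderiv ℝ f y (0, 1)) x (0, 1)

/-- The wave operator `□ f = -∂²f/∂u² + ∂²f/∂v²`. -/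
def boxR (f : ℝ × ℝ → ℝ) (x : ℝ × ℝ) : ℝ := -duuR f x + dvvR f x

/-! ### 2×2 matrices over `𝒜`. -/

abbrev M2A := Matrix (Fin 2) (Fin 2) LorentzA

/-- The conjugate transpose `B*` of `B ∈ M₂(𝒜)`. -/
def ctrans (B : M2A) : M2A := (B.map conjA).transpose

/-- `Herm₂(𝒜) = {B ∈ M₂(𝒜) : B = B*}`. -/
def Herm2 : Set M2A := {B | B = ctrans B}

/-- `SL₂(𝒜) = {B ∈ M₂(𝒜) : det B = 1}`. -/
def SL2A : Set M2A := {B | B.det = 1}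

/-- The inclusion `M₂(ℝ) ⊆ M₂(𝒜)`. -/
def mR (C : Matrix (Fin 2) (Fin 2) ℝ) : M2A := C.map toA

/-! ### The complexified Lorentz numbers `𝒜_ℂ = 𝒜 ⊗ ℂ ≅ ℂ × ℂ` (split coordinates),
and the quaternions `ℍ^{𝒜_ℂ}` with coefficients in `𝒜_ℂ`. -/

abbrev AC : Type := ℂ × ℂ

/-- `σ ∈ 𝒜_ℂ`. -/
def sC : AC := (1, -1)

/-- The complex unit `i ∈ 𝒜_ℂ`. -/
def iC : AC := (Complex.I, Complex.I)

/-- Conjugation `u + σ v ↦ u - σ v` (`u, v ∈ ℂ`) of `𝒜_ℂ`. -/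
def hatC (z : AC) : AC := (z.2, z.1)

/-- The inclusion `ℝ ⊆ 𝒜_ℂ`. -/
def rc (t : ℝ) : AC := ((t : ℂ), (t : ℂ))

/-- The inclusion `𝒜 ⊆ 𝒜_ℂ`. -/
def toAC (a : LorentzA) : AC := ((a.1 : ℂ), (a.2 : ℂ))

/-- `a ↦ i·a`, the image of `𝒜` in `i·𝒜 ⊆ 𝒜_ℂ`. -/
def iAC (a : LorentzA) : AC := (Complex.I * a.1, Complex.I * a.2)

/-- `ℍ^{𝒜_ℂ}`: quaternions `ζ₀·1 + ζ₁·I + ζ₂·J + ζ₃·K` with `ζᵢ ∈ 𝒜_ℂ`,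
`I² = J² = K² = -1`, `IJ = -JI = K`. -/
abbrev HAC := Quaternion AC

/-- The scalar quaternion `z·1`. -/
def qscalar (z : AC) : HAC := ⟨z, 0, 0, 0⟩

/-- The quaternion unit `I`. -/
def qI : HAC := ⟨0, 1, 0, 0⟩

/-- The quaternion unit `J`. -/
def qJ : HAC := ⟨0, 0, 1, 0⟩

/-- The quaternion unit `K`. -/
def qK : HAC := ⟨0, 0, 0, 1⟩

/-- `ζ̂`: apply `𝒜_ℂ`-conjugation to each coefficient of a quaternion.
(Quaternionic conjugation `ζ̄` is `star ζ`.) -/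
def qhat (q : HAC) : HAC := ⟨hatC q.re, hatC q.imI, hatC q.imJ, hatC q.imK⟩

/-- `H(ζ, ζ') = ½(ζ ζ̄' + ζ' ζ̄) = ζ₀ζ₀' + ζ₁ζ₁' + ζ₂ζ₂' + ζ₃ζ₃' ∈ 𝒜_ℂ`. -/
def Hform (q q' : HAC) : AC := q.re * q'.re + q.imI * q'.imI + q.imJ * q'.imJ + q.imK * q'.imK

/-- `p₀·1 + i p₁·I + p₂·J + i p₃·K` with `pᵢ ∈ 𝒜`: the generic element of `ℍ₀`. -/
def mk0 (p₀ p₁ p₂ p₃ : LorentzA) : HAC :=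
  qscalar (toAC p₀) + qscalar (iAC p₁) * qI + qscalar (toAC p₂) * qJ + qscalar (iAC p₃) * qK

/-- `i q₀·1 + q₁·I + i q₂·J + q₃·K` with `qᵢ ∈ 𝒜`: the generic element of `ℍ₁`. -/
def mk1 (q₀ q₁ q₂ q₃ : LorentzA) : HAC :=
  qscalar (iAC q₀) + qscalar (toAC q₁) * qI + qscalar (iAC q₂) * qJ + qscalar (toAC q₃) * qK

/-- `ℍ₀ = {p₀·1 + i p₁·I + p₂·J + i p₃·K : pᵢ ∈ 𝒜} ⊆ ℍ^{𝒜_ℂ}`. -/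
def H0set : Set HAC := {ζ | ∃ p₀ p₁ p₂ p₃ : LorentzA, ζ = mk0 p₀ p₁ p₂ p₃}

/-- `ℍ₁ = {i q₀·1 + q₁·I + i q₂·J + q₃·K : qᵢ ∈ 𝒜} ⊆ ℍ^{𝒜_ℂ}`. -/
def H1set : Set HAC := {ζ | ∃ q₀ q₁ q₂ q₃ : LorentzA, ζ = mk1 q₀ q₁ q₂ q₃}

/-- `Spin(2,2) = {p ∈ ℍ₀ : H(p,p) = 1}`. -/
def SpinSet : Set HAC := {p | p ∈ H0set ∧ Hform p p = 1}

/-- Extraction of the `𝒜`-coefficient of an element of `𝒜 ⊆ 𝒜_ℂ`. -/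
def reEx (z : AC) : LorentzA := (z.1.re, z.2.re)

/-- Extraction of the `𝒜`-coefficient of an element of `i·𝒜 ⊆ 𝒜_ℂ`. -/
def imEx (z : AC) : LorentzA := (z.1.im, z.2.im)

/-- The map `A₀ : ℍ₀ → M₂(𝒜)`,
`p₀·1 + i p₁·I + p₂·J + i p₃·K ↦ [[p₀ - σp₁, p₂ - σp₃], [-p₂ - σp₃, p₀ + σp₁]]`
(written via coefficient extraction, so that it is a total function on `ℍ^{𝒜_ℂ}`
agreeing with `A₀` on `ℍ₀`). -/
def A0 (ζ : HAC) : M2A :=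
  !![reEx ζ.re - sA * imEx ζ.imI, reEx ζ.imJ - sA * imEx ζ.imK;
     -reEx ζ.imJ - sA * imEx ζ.imK, reEx ζ.re + sA * imEx ζ.imI]

/-- The map `A₁ : ℍ₁ → M₂(𝒜)`,
`i q₀·1 + q₁·I + i q₂·J + q₃·K ↦ [[-q₁ - σq₀, -q₃ - σq₂], [-q₃ + σq₂, q₁ - σq₀]]`. -/
def A1 (ζ : HAC) : M2A :=
  !![-reEx ζ.imI - sA * imEx ζ.re, -reEx ζ.imK - sA * imEx ζ.imJ;
     -reEx ζ.imK + sA * imEx ζ.imJ, reEx ζ.imI - sA * imEx ζ.re]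
/-- The directional derivative `dF_x(X)` of a matrix-valued map, taken entrywise. -/
def dMat (Fm : ℝ × ℝ → M2A) (x X : ℝ × ℝ) : M2A :=
  Matrix.of fun i j => fderiv ℝ (fun y => Fm y i j) x X

/-!
Left-translating by `B`, the product and conjugation rules give `B⁻¹ · dF(X) · (B*)⁻¹ = N + N*`
with `N = B⁻¹ dB(X)`.  As `∂_v B = σ ∂_u B`, the matrix `N` is `z = X₁ + σX₂` times the constant
`[[0, θ₀], [ω₀, 0]]`, so `N + N*` is off-diagonal with entries `α` and `α̂`, where
`α = θ₀z + ω̂₀ẑ`.  Since `det B = 1`, this yields `-det dF(X) = αα̂`, the pullback of the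
standard Lorentzian form of `𝒜` under the real-linear map `z ↦ α`.  Eliminating `ẑ` between `α`
and `α̂` leaves `(|θ₀|² - |ω₀|²) z`, so this map is invertible as soon as `|θ₀|² ≠ |ω₀|²`.
-/

section Conjugation

/-- Conjugation `a ↦ â` bundled as an automorphism of the `ℝ`-algebra `𝒜`, to make the library's
results on ring homomorphisms and continuous linear equivalences available. -/
def conjAEquiv : LorentzA ≃ₐ[ℝ] LorentzA where
  __ := (RingEquiv.prodComm : LorentzA ≃+* LorentzA)
  commutes' _ := rfl

/-- The real-linear coordinates `(u, v) ↦ u + σv` on `𝒜`. -/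
def mkAEquiv : (ℝ × ℝ) ≃ₗ[ℝ] LorentzA where
  toFun X := mkA X.1 X.2
  map_add' X Y := by ext <;> simp only [mkA, Prod.fst_add, Prod.snd_add] <;> ring
  map_smul' c X := by
    ext <;> simp only [mkA, Prod.smul_fst, Prod.smul_snd, smul_eq_mul, RingHom.id_apply] <;> ring
  invFun a := (ReA a, ImA a)
  left_inv X := by ext <;> simp only [ReA, ImA, mkA] <;> ring
  right_inv a := by ext <;> simp only [ReA, ImA, mkA] <;> ring

lemma conjA_add (a b : LorentzA) : conjA (a + b) = conjA a + conjA b := rfl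

lemma conjA_mul (a b : LorentzA) : conjA (a * b) = conjA a * conjA b := rfl

lemma conjA_conjA (a : LorentzA) : conjA (conjA a) = a := rfl

lemma mul_conjA (a : LorentzA) : a * conjA a = toA (nsqA a) := by
  ext
  · rfl
  · exact mul_comm _ _

lemma mkA_eq_smul_add_smul (u v : ℝ) : mkA u v = u • 1 + v • sA := by
  ext <;> simp [mkA, sA, sub_eq_add_neg]

lemma nsqA_mkA (u v : ℝ) : nsqA (mkA u v) = u ^ 2 - v ^ 2 := by
  simp only [nsqA, mkA]
  ring

end Conjugation

section ConjugateTranspose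

lemma ctrans_of (a b c d : LorentzA) :
    ctrans !![a, b; c, d] = !![conjA a, conjA c; conjA b, conjA d] := by
  ext i j : 1
  fin_cases i <;> fin_cases j <;> rfl

lemma ctrans_ctrans (P : M2A) : ctrans (ctrans P) = P := rfl

lemma ctrans_mul (P Q : M2A) : ctrans (P * Q) = ctrans Q * ctrans P := by
  have h : (P * Q).map conjA = P.map conjA * Q.map conjA := Matrix.map_mul (f := conjAEquiv)
  rw [ctrans, h, Matrix.transpose_mul, ctrans, ctrans]

lemma det_ctrans (P : M2A) : (ctrans P).det = conjA P.det :=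
  (Matrix.det_transpose _).trans (conjAEquiv.map_det P).symm

lemma mul_ctrans_mem_Herm2 (P : M2A) : P * ctrans P ∈ Herm2 := by
  rw [Herm2, Set.mem_ofPred_eq, ctrans_mul, ctrans_ctrans]

lemma det_mul_mul_ctrans (P N : M2A) :
    (P * N * ctrans P).det = toA (nsqA P.det) * N.det := by
  rw [Matrix.det_mul, Matrix.det_mul, det_ctrans, ← mul_conjA, mul_right_comm]

lemma det_mul_mul_ctrans_of_det_eq_one {P : M2A} (hP : P.det = 1) (N : M2A) :
    (P * N * ctrans P).det = N.det := by
  have h : toA (nsqA P.det) = 1 := by rw [← mul_conjA, hP]; exact one_mul 1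
  rw [det_mul_mul_ctrans, h, one_mul]

end ConjugateTranspose

section Derivative

variable {B : ℝ × ℝ → M2A} {x : ℝ × ℝ}

lemma dMat_ctrans (X : ℝ × ℝ) :
    dMat (fun y => ctrans (B y)) x X = ctrans (dMat B x X) := by
  ext i j : 1
  exact congrArg (· X)
    (conjAEquiv.toLinearEquiv.toContinuousLinearEquiv.comp_fderiv (f := fun y => B y j i))

lemma dMat_mul {C : ℝ × ℝ → M2A} (hB : ∀ i j, DifferentiableAt ℝ (fun y => B y i j) x)
    (hC : ∀ i j, DifferentiableAt ℝ (fun y => C y i j) x) (X : ℝ × ℝ) :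
    dMat (fun y => B y * C y) x X = dMat B x X * C x + B x * dMat C x X := by
  ext i j : 1
  have h : fderiv ℝ (fun y => ∑ k, B y i k * C y k j) x =
      ∑ k, (B x i k • fderiv ℝ (fun y => C y k j) x + C x k j • fderiv ℝ (fun y => B y i k) x) :=
    (fderiv_fun_sum fun k _ => (hB i k).fun_mul (hC k j)).trans
      (Finset.sum_congr rfl fun k _ => fderiv_fun_mul (hB i k) (hC k j))
  simp only [dMat, Matrix.of_apply, Matrix.mul_apply, Matrix.add_apply, h,
    sum_apply, add_apply, smul_apply,
    smul_eq_mul, ← Finset.sum_add_distrib]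
  exact Finset.sum_congr rfl fun k _ => by ring

lemma dMat_mul_ctrans_self (hB : ∀ i j, DifferentiableAt ℝ (fun y => B y i j) x) {X : ℝ × ℝ}
    {N : M2A} (hN : dMat B x X = B x * N) :
    dMat (fun y => B y * ctrans (B y)) x X = B x * (N + ctrans N) * ctrans (B x) := by
  have hB' (i j) : DifferentiableAt ℝ (fun y => ctrans (B y) i j) x :=
    conjAEquiv.toLinearEquiv.toContinuousLinearEquiv.differentiableAt.comp x (hB j i)
  rw [dMat_mul hB hB', dMat_ctrans, hN, ctrans_mul, ← Matrix.mul_assoc, ← Matrix.add_mul,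
    ← Matrix.mul_add]

lemma dMat_eq_mkA_smul (h : dMat B x (0, 1) = sA • dMat B x (1, 0)) (X : ℝ × ℝ) :
    dMat B x X = mkA X.1 X.2 • dMat B x (1, 0) := by
  have hX : X = X.1 • (1, 0) + X.2 • (0, 1) := by ext <;> simp
  have hlin : dMat B x X = X.1 • dMat B x (1, 0) + X.2 • dMat B x (0, 1) := by
    ext i j : 1
    simpa only [dMat, Matrix.of_apply, Matrix.add_apply, Matrix.smul_apply, map_add, map_smul]
      using congrArg (fderiv ℝ (fun y => B y i j) x) hX
  rw [hlin, h, mkA_eq_smul_add_smul, add_smul, smul_assoc, smul_assoc, one_smul]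

lemma dMat_eq_mul_mkA_smul (hB : IsUnit (B x).det) {N : M2A}
    (hu : (B x)⁻¹ * dMat B x (1, 0) = N) (hv : (B x)⁻¹ * dMat B x (0, 1) = sA • N)
    (X : ℝ × ℝ) : dMat B x X = B x * (mkA X.1 X.2 • N) := by
  have hu' : dMat B x (1, 0) = B x * N := by
    rw [← hu, Matrix.mul_nonsing_inv_cancel_left _ _ hB]
  have hv' : dMat B x (0, 1) = sA • dMat B x (1, 0) := by
    rw [hu', ← Matrix.mul_smul, ← hv, Matrix.mul_nonsing_inv_cancel_left _ _ hB]
  rw [dMat_eq_mkA_smul hv', hu', Matrix.mul_smul]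

end Derivative

section Signature

/-- The real-linear map `z ↦ pz + q̂ẑ` of `𝒜`; at `p = θ₀`, `q = ω₀` it is the
value of the 1-form `θ + ω̄`, a factor of the induced metric, on the tangent vector `z`. -/
def coframe (p q : LorentzA) : LorentzA →ₗ[ℝ] LorentzA :=
  LinearMap.mulLeft ℝ p + LinearMap.mulLeft ℝ (conjA q) ∘ₗ conjAEquiv.toLinearMap

lemma coframe_apply (p q z : LorentzA) : coframe p q z = p * z + conjA q * conjA z := rfl

lemma conjA_coframe (p q z : LorentzA) : conjA (coframe p q z) = coframe q p z := by
  rw [coframe_apply, coframe_apply, conjA_add, conjA_mul, conjA_mul, conjA_conjA, conjA_conjA,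
    add_comm]

lemma smul_add_ctrans_smul (p q z : LorentzA) :
    z • !![0, p; q, 0] + ctrans (z • !![0, p; q, 0]) =
      !![0, coframe p q z; coframe q p z, 0] := by
  have h : z • !![0, p; q, 0] = !![0, p * z; q * z, 0] := by simp [mul_comm z]
  rw [h, ctrans_of]
  ext i j : 1
  fin_cases i <;> fin_cases j <;> simp [coframe_apply, conjA]

lemma neg_det_coframe (p q z : LorentzA) :
    -(!![0, coframe p q z; coframe q p z, 0] : M2A).det =
      coframe p q z * conjA (coframe p q z) := by
  rw [Matrix.det_fin_two_of, conjA_coframe]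
  ring

lemma conjA_mul_coframe_sub (p q z : LorentzA) :
    conjA p * coframe p q z - conjA q * conjA (coframe p q z) = (nsqA p - nsqA q) • z := by
  ext <;> simp [coframe_apply, conjA, nsqA] <;> ring

lemma coframe_injective {p q : LorentzA} (h : nsqA p ≠ nsqA q) :
    Function.Injective (coframe p q) := by
  refine (injective_iff_map_eq_zero _).mpr fun z hz => ?_
  have hz' : (nsqA p - nsqA q) • z = 0 := by
    rw [← conjA_mul_coframe_sub, hz, show conjA 0 = 0 from rfl, mul_zero, mul_zero, sub_zero]
  exact (smul_eq_zero.mp hz').resolve_left (sub_ne_zero.mpr h)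

lemma exists_linearEquiv_mul_conjA_eq (T : LorentzA ≃ₗ[ℝ] LorentzA) :
    ∃ L : (ℝ × ℝ) ≃ₗ[ℝ] (ℝ × ℝ), ∀ X : ℝ × ℝ,
      T (mkAEquiv (L X)) * conjA (T (mkAEquiv (L X))) = toA (X.1 ^ 2 - X.2 ^ 2) := by
  refine ⟨mkAEquiv ≪≫ₗ T.symm ≪≫ₗ mkAEquiv.symm, fun X => ?_⟩
  have hT : T (mkAEquiv ((mkAEquiv ≪≫ₗ T.symm ≪≫ₗ mkAEquiv.symm) X)) = mkA X.1 X.2 := by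
    simp only [LinearEquiv.trans_apply, LinearEquiv.apply_symm_apply]
    rfl
  rw [hT, mul_conjA, nsqA_mkA]

end Signature

theorem stmt16_general {B : ℝ × ℝ → M2A} {x : ℝ × ℝ} {p q : LorentzA}
    (hB : ∀ i j, DifferentiableAt ℝ (fun y => B y i j) x) (hdet : (B x).det = 1)
    (hu : (B x)⁻¹ * dMat B x (1, 0) = !![0, p; q, 0])
    (hv : (B x)⁻¹ * dMat B x (0, 1) = !![0, sA * p; sA * q, 0]) :
    (B x * ctrans (B x) ∈ Herm2 ∧ (B x * ctrans (B x)).det = 1) ∧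
    (∀ X : ℝ × ℝ,
      dMat (fun y => B y * ctrans (B y)) x X =
        B x * !![0, p * mkA X.1 X.2 + conjA q * conjA (mkA X.1 X.2);
                 q * mkA X.1 X.2 + conjA p * conjA (mkA X.1 X.2), 0] * ctrans (B x) ∧
      -(dMat (fun y => B y * ctrans (B y)) x X).det =
        (p * mkA X.1 X.2 + conjA q * conjA (mkA X.1 X.2)) *
          conjA (p * mkA X.1 X.2 + conjA q * conjA (mkA X.1 X.2))) ∧
    (nsqA p ≠ nsqA q →
      ∃ L : (ℝ × ℝ) ≃ₗ[ℝ] (ℝ × ℝ), ∀ X : ℝ × ℝ,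
        -(dMat (fun y => B y * ctrans (B y)) x (L X)).det = toA (X.1 ^ 2 - X.2 ^ 2)) := by
  have hv' : (B x)⁻¹ * dMat B x (0, 1) = sA • !![0, p; q, 0] := by simpa using hv
  have hdF (X : ℝ × ℝ) : dMat (fun y => B y * ctrans (B y)) x X =
      B x * !![0, coframe p q (mkAEquiv X); coframe q p (mkAEquiv X), 0] * ctrans (B x) := by
    rw [← smul_add_ctrans_smul]
    exact dMat_mul_ctrans_self hB (dMat_eq_mul_mkA_smul (hdet ▸ isUnit_one) hu hv' X)
  have hmetric (X : ℝ × ℝ) : -(dMat (fun y => B y * ctrans (B y)) x X).det =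
      coframe p q (mkAEquiv X) * conjA (coframe p q (mkAEquiv X)) := by
    rw [hdF, det_mul_mul_ctrans_of_det_eq_one hdet, neg_det_coframe]
  refine ⟨⟨mul_ctrans_mem_Herm2 _, ?_⟩, fun X => ⟨hdF X, hmetric X⟩, fun hne => ?_⟩
  · simpa using det_mul_mul_ctrans_of_det_eq_one hdet 1
  · obtain ⟨L, hL⟩ := exists_linearEquiv_mul_conjA_eq
      (LinearEquiv.ofInjectiveEndo (coframe p q) (coframe_injective hne))
    exact ⟨L, fun X => (hmetric (L X)).trans (hL X)⟩

/-- Let `B : U → SL₂(𝒜)` be `C¹` with `B⁻¹dB = [[0, θ], [ω, 0]]` for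
conformal 1-forms `θ = θ₀·da`, `ω = ω₀·da`.  Then `F = B·B*` takes values in
`ℍ^{2,1} ≅ {C ∈ Herm₂(𝒜) : det C = 1}`; its differential is
`dF(X) = B·[[0, θ₀z + ω̂₀ẑ], [ω₀z + θ̂₀ẑ, 0]]·B*` with `-det dF(X) = |θ₀z + ω̂₀ẑ|²`
(the induced metric `(θ + ω̄)(ω + θ̄)`); and wherever `|θ₀|² ≠ |ω₀|²` this quadratic form is
nondegenerate of signature `(1,1)` (it is the standard form `X₁² - X₂²` in a suitable basis),
so `F` is a flat Lorentzian isometric immersion into `ℍ^{2,1}`. -/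
theorem stmt16 (U : Set (ℝ × ℝ)) (hU : IsOpen U)
    (B : ℝ × ℝ → M2A) (θ₀ ω₀ : ℝ × ℝ → LorentzA)
    (hB : ∀ i j, ContDiffOn ℝ 1 (fun x => B x i j) U)
    (hBsl : ∀ x ∈ U, (B x).det = 1)
    (hθ : ContDiffOn ℝ 1 θ₀ U) (hω : ContDiffOn ℝ 1 ω₀ U)
    (hθc : ∀ x ∈ U, Dahat θ₀ x = 0) (hωc : ∀ x ∈ U, Dahat ω₀ x = 0)
    (hu : ∀ x ∈ U, (B x)⁻¹ * dMat B x (1, 0) = !![0, θ₀ x; ω₀ x, 0])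
    (hv : ∀ x ∈ U, (B x)⁻¹ * dMat B x (0, 1) = !![0, sA * θ₀ x; sA * ω₀ x, 0]) :
    (∀ x ∈ U, B x * ctrans (B x) ∈ Herm2 ∧ (B x * ctrans (B x)).det = 1) ∧
    (∀ x ∈ U, ∀ X : ℝ × ℝ,
      dMat (fun y => B y * ctrans (B y)) x X =
        B x * !![0, θ₀ x * mkA X.1 X.2 + conjA (ω₀ x) * conjA (mkA X.1 X.2);
                 ω₀ x * mkA X.1 X.2 + conjA (θ₀ x) * conjA (mkA X.1 X.2), 0] * ctrans (B x) ∧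
      -(dMat (fun y => B y * ctrans (B y)) x X).det =
        (θ₀ x * mkA X.1 X.2 + conjA (ω₀ x) * conjA (mkA X.1 X.2)) *
          conjA (θ₀ x * mkA X.1 X.2 + conjA (ω₀ x) * conjA (mkA X.1 X.2))) ∧
    (∀ x ∈ U, nsqA (θ₀ x) ≠ nsqA (ω₀ x) →
      ∃ L : (ℝ × ℝ) ≃ₗ[ℝ] (ℝ × ℝ), ∀ X : ℝ × ℝ,
        -(dMat (fun y => B y * ctrans (B y)) x (L X)).det =
          toA (X.1 ^ 2 - X.2 ^ 2)) := by
  have h x (hx : x ∈ U) := stmt16_general (fun i j => ((hB i j).contDiffAt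
    (hU.mem_nhds hx)).differentiableAt one_ne_zero) (hBsl x hx) (hu x hx) (hv x hx)
  exact ⟨fun x hx => (h x hx).1, fun x hx => (h x hx).2.1, fun x hx => (h x hx).2.2⟩
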